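/- McAllester's PAC-Bayes bound: let losses take values in [0,1], let P be a prior probability measure on the hypothesis space H, let n ≥ 1, and let δ ∈ (0,1). Then with probability at least 1 − δ over the draw of n i.i.d. samples z₁, …, z_n from D, simultaneously for every probability measure Q on H: E_{h∼Q}[R(h)] ≤ E_{h∼Q}[R̂_n(h)] + sqrt( (KL(Q‖P) + log(2√n/δ)) / (2n) ). -/

import Mathlib

/-!
For a fixed hypothesis `h` the deviation `Δ = R(h) - R̂_n(h)` is sub-Gaussian with parameter
`c = 1 / (4 n)` by Hoeffding's lemma, and the bound rests on the moment estimate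
`E[exp (2 n Δ²)] ≤ 2 √n`. Averaging the estimate over the prior `P` and applying Markov's inequality
gives `∫ exp (2 n Δ²) dP ≤ 2 √n / δ` with probability at least `1 - δ`. On that single event, the
Donsker–Varadhan inequality and `(∫ Δ dQ)² ≤ ∫ Δ² dQ` bound `∫ Δ dQ` for all `Q` simultaneously.

The moment estimate is a mixture argument. If `X` is sub-Gaussian with parameter `c`, then
`x = X / √c` satisfies `E[exp (v x - v² / 2)] ≤ 1` for every `v`. Completing the square,
`∫_a^b exp (v x - v² / 2) dv = exp (x² / 2) ∫_a^b exp (-(v - x)² / 2) dv`, and the last integral is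
at least `1` when `[a, b]` contains `x` and has length at least `2`. So `E[exp (x² / 2)] ≤ b - a`
as soon as `x` takes its values in such an interval; for `X = Δ` this interval is
`[2 √n (R(h) - 1), 2 √n R(h)]`.
-/

open MeasureTheory ENNReal Classical

/-- Kullback–Leibler divergence `KL(Q‖P)`, valued in `ℝ≥0∞`: the integral of
the log-likelihood ratio when `Q ≪ P` and the ratio is integrable, `+∞`
otherwise. -/
noncomputable def klDiv' {H : Type*} [MeasurableSpace H] (Q P : Measure H) : ℝ≥0∞ :=
  if Q ≪ P ∧ Integrable (llr Q P) Q then ENNReal.ofReal (∫ h, llr Q P h ∂Q) else ⊤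

open ProbabilityTheory

/-! ### Squared exponential moments of sub-Gaussian variables -/

lemma exists_mem_Icc_add_of_le_sub {a b x l : ℝ} (hl : 0 ≤ l) (hx : x ∈ Set.Icc a b)
    (hab : l ≤ b - a) : ∃ c, a ≤ c ∧ c + l ≤ b ∧ x ∈ Set.Icc c (c + l) := by
  refine ⟨min x (b - l), le_min hx.1 (by linarith), ?_, min_le_left _ _, ?_⟩
  · linarith [min_le_right x (b - l)]
  · rw [← min_add_add_right, sub_add_cancel]
    exact le_min (by linarith) hx.2

/-- The tangent of `exp` at `-log 2` suffices because the mean of `(v - x) ^ 2 / 2` over the window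
is at most `2 / 3 < log 2`. -/
lemma one_le_integral_exp_neg_sq_div_two_of_mem_Icc_add_two {c x : ℝ} (hx : x ∈ Set.Icc c (c + 2)) :
    1 ≤ ∫ v in c..c + 2, Real.exp (-((v - x) ^ 2 / 2)) := by
  have tangent (y : ℝ) : (1 + Real.log 2 + y) / 2 ≤ Real.exp y := by
    have h := Real.add_one_le_exp (y + Real.log 2)
    rw [Real.exp_add, Real.exp_log two_pos] at h
    linarith
  have tangent_integral : ∫ v in c..c + 2, (1 + Real.log 2 + -((v - x) ^ 2 / 2)) / 2
      = 1 + Real.log 2 - ((c + 2 - x) ^ 3 - (c - x) ^ 3) / 12 := by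
    rw [intervalIntegral.integral_comp_sub_right (fun u => (1 + Real.log 2 + -(u ^ 2 / 2)) / 2) x,
      intervalIntegral.integral_div, intervalIntegral.integral_add
        (Continuous.intervalIntegrable (by fun_prop) _ _)
        (Continuous.intervalIntegrable (by fun_prop) _ _)]
    simp only [intervalIntegral.integral_const, intervalIntegral.integral_neg,
      intervalIntegral.integral_div, integral_pow, smul_eq_mul]
    ring
  calc (1 : ℝ) ≤ 1 + Real.log 2 - ((c + 2 - x) ^ 3 - (c - x) ^ 3) / 12 := by
        nlinarith [Real.log_two_gt_d9, mul_nonneg (sub_nonneg.2 hx.1) (sub_nonneg.2 hx.2)]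
    _ ≤ _ := by
        rw [← tangent_integral]
        exact intervalIntegral.integral_mono_on (by linarith)
          (Continuous.intervalIntegrable (by fun_prop) _ _)
          (Continuous.intervalIntegrable (by fun_prop) _ _) fun v _ => tangent _

lemma one_le_integral_exp_neg_sq_div_two {a b x : ℝ} (hx : x ∈ Set.Icc a b) (hab : 2 ≤ b - a) :
    1 ≤ ∫ v in a..b, Real.exp (-((v - x) ^ 2 / 2)) := by
  obtain ⟨c, hac, hcb, hxc⟩ := exists_mem_Icc_add_of_le_sub zero_le_two hx hab
  exact (one_le_integral_exp_neg_sq_div_two_of_mem_Icc_add_two hxc).trans <|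
    intervalIntegral.integral_mono_interval hac (by linarith) hcb
      (.of_forall fun _ => (Real.exp_pos _).le) (Continuous.intervalIntegrable (by fun_prop) _ _)

lemma exp_sq_div_two_le_integral {a b x : ℝ} (hx : x ∈ Set.Icc a b) (hab : 2 ≤ b - a) :
    Real.exp (x ^ 2 / 2) ≤ ∫ v in a..b, Real.exp (v * x - v ^ 2 / 2) := by
  have complete_square (v : ℝ) : Real.exp (v * x - v ^ 2 / 2)
      = Real.exp (x ^ 2 / 2) * Real.exp (-((v - x) ^ 2 / 2)) := by
    rw [← Real.exp_add]
    ring_nf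
  simp_rw [complete_square, intervalIntegral.integral_const_mul]
  exact le_mul_of_one_le_right (Real.exp_pos _).le (one_le_integral_exp_neg_sq_div_two hx hab)

lemma ofReal_exp_sq_div_two_le_lintegral {a b x : ℝ} (hx : x ∈ Set.Icc a b) (hab : 2 ≤ b - a) :
    ENNReal.ofReal (Real.exp (x ^ 2 / 2)) ≤
      ∫⁻ v in Set.Ioc a b, ENNReal.ofReal (Real.exp (v * x - v ^ 2 / 2)) := by
  have hle : a ≤ b := by linarith
  rw [← ofReal_integral_eq_lintegral_ofReal, ← intervalIntegral.integral_of_le hle]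
  · exact ENNReal.ofReal_le_ofReal (exp_sq_div_two_le_integral hx hab)
  · exact (intervalIntegrable_iff_integrableOn_Ioc_of_le hle).1
      (Continuous.intervalIntegrable (by fun_prop) _ _)
  · exact .of_forall fun _ => (Real.exp_pos _).le

section SubGaussian

variable {Ω : Type*} [MeasurableSpace Ω] {μ : Measure Ω} {X : Ω → ℝ} {c : NNReal}

lemma lintegral_exp_mul_sub_le_one_of_hasSubgaussianMGF (hX : HasSubgaussianMGF X c μ) (t : ℝ) :
    ∫⁻ ω, ENNReal.ofReal (Real.exp (t * X ω - c * t ^ 2 / 2)) ∂μ ≤ 1 := by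
  simp_rw [Real.exp_sub]
  rw [← ofReal_integral_eq_lintegral_ofReal ((hX.integrable_exp_mul t).div_const _)
    (.of_forall fun _ => by positivity), integral_div, ENNReal.ofReal_le_one,
    div_le_one (Real.exp_pos _)]
  exact hX.mgf_le t

lemma lintegral_exp_sq_div_le_of_hasSubgaussianMGF [SFinite μ] (hX : HasSubgaussianMGF X c μ)
    (hc : 0 < c) {a b : ℝ} (hXab : ∀ᵐ ω ∂μ, X ω ∈ Set.Icc a b) (hab : 2 * √c ≤ b - a) :
    ∫⁻ ω, ENNReal.ofReal (Real.exp (X ω ^ 2 / (2 * c))) ∂μ ≤ ENNReal.ofReal ((b - a) / √c) := by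
  have sqrt_pos : 0 < √(c : ℝ) := Real.sqrt_pos.2 hc
  have sq_sqrt : √(c : ℝ) ^ 2 = c := Real.sq_sqrt c.2
  calc ∫⁻ ω, ENNReal.ofReal (Real.exp (X ω ^ 2 / (2 * c))) ∂μ
      = ∫⁻ ω, ENNReal.ofReal (Real.exp ((X ω / √c) ^ 2 / 2)) ∂μ := by
        simp_rw [div_pow, sq_sqrt, div_div, mul_comm (c : ℝ)]
    _ ≤ ∫⁻ ω, (∫⁻ v in Set.Ioc (a / √c) (b / √c),
          ENNReal.ofReal (Real.exp (v * (X ω / √c) - v ^ 2 / 2))) ∂μ := by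
        refine lintegral_mono_ae ?_
        filter_upwards [hXab] with ω ⟨haX, hXb⟩
        exact ofReal_exp_sq_div_two_le_lintegral ⟨by gcongr, by gcongr⟩
          (by rwa [← sub_div, le_div_iff₀ sqrt_pos])
    _ = ∫⁻ v in Set.Ioc (a / √c) (b / √c),
          ∫⁻ ω, ENNReal.ofReal (Real.exp (v * (X ω / √c) - v ^ 2 / 2)) ∂μ := by
        have hexp : Measurable fun p : ℝ × ℝ =>
            ENNReal.ofReal (Real.exp (p.2 * (p.1 / √c) - p.2 ^ 2 / 2)) := by fun_prop
        exact lintegral_lintegral_swap (hexp.comp_aemeasurable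
          (hX.aemeasurable.comp_fst.prodMk measurable_snd.aemeasurable))
    _ ≤ ∫⁻ _ in Set.Ioc (a / √c) (b / √c), 1 := lintegral_mono fun v => by
        convert! lintegral_exp_mul_sub_le_one_of_hasSubgaussianMGF hX (v / √c) using 6
        · ring
        · rw [div_pow, sq_sqrt, mul_div_cancel₀ _ (by positivity)]
    _ = ENNReal.ofReal ((b - a) / √c) := by
        rw [setLIntegral_one, Real.volume_Ioc, sub_div]

end SubGaussian

/-! ### Deviations of the empirical risk -/

section Risk

variable {H Z : Type*} {ℓ : H → Z → ℝ} {n : ℕ} {h : H}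

/-- The empirical risk `R̂_n(h)` of the hypothesis `h` on the sample `zs`. -/
noncomputable def empiricalRisk (ℓ : H → Z → ℝ) (zs : Fin n → Z) (h : H) : ℝ :=
  (n : ℝ)⁻¹ * ∑ i, ℓ h (zs i)

lemma empiricalRisk_mem_Icc (hn : n ≠ 0) (hℓ : ∀ z, ℓ h z ∈ Set.Icc (0 : ℝ) 1) (zs : Fin n → Z) :
    empiricalRisk ℓ zs h ∈ Set.Icc (0 : ℝ) 1 := by
  rw [empiricalRisk, Finset.mul_sum]
  exact (convex_Icc (0 : ℝ) 1).sum_mem (w := fun _ => (n : ℝ)⁻¹) (fun _ _ => by positivity)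
    (by simp [hn]) fun i _ => hℓ (zs i)

variable [MeasurableSpace Z] {D : Measure Z}

/-- The true risk `R(h)` of the hypothesis `h` under the sample distribution `D`. -/
noncomputable def risk (ℓ : H → Z → ℝ) (D : Measure Z) (h : H) : ℝ := ∫ z, ℓ h z ∂D

lemma risk_mem_Icc [IsProbabilityMeasure D] (hℓm : AEMeasurable (ℓ h) D)
    (hℓ : ∀ z, ℓ h z ∈ Set.Icc (0 : ℝ) 1) : risk ℓ D h ∈ Set.Icc (0 : ℝ) 1 :=
  (convex_Icc 0 1).integral_mem isClosed_Icc (.of_forall hℓ)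
    (.of_mem_Icc 0 1 hℓm (.of_forall hℓ))

lemma measurable_risk [MeasurableSpace H] [SFinite D] (hℓ : Measurable (Function.uncurry ℓ)) :
    Measurable (risk ℓ D) :=
  hℓ.stronglyMeasurable.integral_prod_right.measurable

lemma measurable_empiricalRisk [MeasurableSpace H] (hℓ : Measurable (Function.uncurry ℓ)) :
    Measurable fun p : (Fin n → Z) × H => empiricalRisk ℓ p.1 p.2 := by
  refine (Finset.measurable_sum _ fun i _ => ?_).const_mul _
  exact hℓ.comp (measurable_snd.prodMk ((measurable_pi_apply i).comp measurable_fst))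

lemma hasSubgaussianMGF_risk_sub_empiricalRisk [IsProbabilityMeasure D] (hn : n ≠ 0)
    (hℓm : AEMeasurable (ℓ h) D) (hℓ : ∀ z, ℓ h z ∈ Set.Icc (0 : ℝ) 1) :
    HasSubgaussianMGF (fun zs => risk ℓ D h - empiricalRisk ℓ zs h) (4 * n)⁻¹
      (Measure.pi fun _ : Fin n => D) := by
  have hoeffding (i : Fin n) : HasSubgaussianMGF (fun zs : Fin n → Z => ℓ h (zs i) - risk ℓ D h)
      ((‖(1 : ℝ) - 0‖₊ / 2) ^ 2) (Measure.pi fun _ : Fin n => D) := by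
    refine .of_map (X := fun z => ℓ h z - risk ℓ D h) (measurable_pi_apply i).aemeasurable ?_
    rw [(measurePreserving_eval (fun _ : Fin n => D) i).map_eq]
    exact hasSubgaussianMGF_of_mem_Icc hℓm (.of_forall hℓ)
  have indep : iIndepFun (fun i (zs : Fin n → Z) => ℓ h (zs i) - risk ℓ D h)
      (Measure.pi fun _ : Fin n => D) := iIndepFun_pi fun _ => hℓm.sub_const _
  have param : (4 * n : NNReal)⁻¹ =
      .mk ((-(n : ℝ)⁻¹) ^ 2) (sq_nonneg _) * ∑ _ : Fin n, (‖(1 : ℝ) - 0‖₊ / 2) ^ 2 := by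
    ext
    rw [NNReal.coe_mul, NNReal.coe_mk, Finset.sum_const, Finset.card_fin, nsmul_eq_mul]
    push_cast
    rw [sub_zero, norm_one]
    field_simp
    norm_num
  have eq_sum (zs : Fin n → Z) : risk ℓ D h - empiricalRisk ℓ zs h =
      -(n : ℝ)⁻¹ * ∑ i, (ℓ h (zs i) - risk ℓ D h) := by
    rw [empiricalRisk, Finset.sum_sub_distrib, Finset.sum_const, Finset.card_fin, nsmul_eq_mul]
    field_simp
    ring
  simp_rw [param, eq_sum]
  exact (HasSubgaussianMGF.sum_of_iIndepFun indep fun i _ => hoeffding i).const_mul _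

lemma lintegral_exp_sq_risk_sub_empiricalRisk_le [IsProbabilityMeasure D] (hn : n ≠ 0)
    (hℓm : AEMeasurable (ℓ h) D) (hℓ : ∀ z, ℓ h z ∈ Set.Icc (0 : ℝ) 1) :
    ∫⁻ zs, ENNReal.ofReal (Real.exp (2 * n * (risk ℓ D h - empiricalRisk ℓ zs h) ^ 2))
      ∂(Measure.pi fun _ : Fin n => D) ≤ ENNReal.ofReal (2 * √n) := by
  have sqrt_param : √((4 * n : NNReal)⁻¹ : NNReal) = (2 * √n)⁻¹ := by
    rw [NNReal.coe_inv, Real.sqrt_inv, NNReal.coe_mul, Real.sqrt_mul (NNReal.coe_nonneg 4)]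
    norm_num
  have two_mul_param : 2 * ((4 * n : NNReal)⁻¹ : NNReal) = (2 * n : ℝ)⁻¹ := by
    push_cast
    field_simp
    norm_num
  have one_le_sqrt : 1 ≤ √(n : ℝ) :=
    Real.one_le_sqrt.2 (Nat.one_le_cast.2 (Nat.one_le_iff_ne_zero.2 hn))
  have deviation_mem_Icc (zs : Fin n → Z) :
      risk ℓ D h - empiricalRisk ℓ zs h ∈ Set.Icc (risk ℓ D h - 1) (risk ℓ D h) := by
    obtain ⟨h0, h1⟩ := empiricalRisk_mem_Icc hn hℓ zs
    constructor <;> linarith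
  have moment := lintegral_exp_sq_div_le_of_hasSubgaussianMGF
    (hasSubgaussianMGF_risk_sub_empiricalRisk hn hℓm hℓ) (by positivity)
    (.of_forall deviation_mem_Icc) (by
      rw [sqrt_param, _root_.sub_sub_cancel]
      field_simp
      exact one_le_sqrt)
  simpa only [sqrt_param, two_mul_param, _root_.sub_sub_cancel, div_inv_eq_mul, one_mul,
    mul_comm _ (2 * n : ℝ)] using moment

end Risk

/-! ### Change of measure -/

section ChangeOfMeasure

variable {H : Type*} [MeasurableSpace H] {P Q : Measure H} [IsProbabilityMeasure Q]
  {f : H → ℝ}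

lemma sq_integral_le_integral_sq (hf : MemLp f 2 Q) : (∫ h, f h ∂Q) ^ 2 ≤ ∫ h, f h ^ 2 ∂Q := by
  have h := variance_nonneg f Q
  rw [variance_eq_sub hf] at h
  exact sub_nonneg.1 h

variable [SigmaFinite P]

/-- The Donsker–Varadhan inequality: Gibbs' inequality for `Q` against the prior tilted by `f`. -/
lemma integral_le_integral_llr_add_log_integral_exp (hQP : Q ≪ P) (hllr : Integrable (llr Q P) Q)
    (hfQ : Integrable f Q) (hfP : Integrable (fun h => Real.exp (f h)) P) :
    ∫ h, f h ∂Q ≤ ∫ h, llr Q P h ∂Q + Real.log (∫ h, Real.exp (f h) ∂P) := by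
  have : NeZero P := ⟨fun hP => IsProbabilityMeasure.ne_zero Q
    (Measure.absolutelyContinuous_zero_iff.1 (hP ▸ hQP))⟩
  have := isProbabilityMeasure_tilted hfP
  have gibbs := InformationTheory.integral_llr_add_sub_measure_univ_nonneg
    (hQP.trans (absolutelyContinuous_tilted hfP)) (integrable_llr_tilted_right hQP hfQ hllr hfP)
  rw [integral_llr_tilted_right hQP hfQ hfP hllr] at gibbs
  simp only [probReal_univ] at gibbs
  linarith

lemma ofReal_integral_le_klDiv'_add_log_rpow {t : ℝ} (ht : 0 < t) (hf : MemLp f 2 Q)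
    (hexp : Integrable (fun h => Real.exp (t * f h ^ 2)) P) :
    ENNReal.ofReal (∫ h, f h ∂Q) ≤
      ((klDiv' Q P + ENNReal.ofReal (Real.log (∫ h, Real.exp (t * f h ^ 2) ∂P))) /
        ENNReal.ofReal t) ^ ((2 : ℝ)⁻¹) := by
  unfold klDiv'
  split_ifs with hkl
  · have hDV := integral_le_integral_llr_add_log_integral_exp hkl.1 hkl.2
      (hf.integrable_sq.const_mul t) hexp
    rw [integral_const_mul] at hDV
    have sq_le : (∫ h, f h ∂Q) ^ 2 ≤
        (∫ h, llr Q P h ∂Q + Real.log (∫ h, Real.exp (t * f h ^ 2) ∂P)) / t := by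
      rw [le_div_iff₀' ht]
      exact (mul_le_mul_of_nonneg_left (sq_integral_le_integral_sq hf) ht.le).trans hDV
    calc ENNReal.ofReal (∫ h, f h ∂Q)
        ≤ ENNReal.ofReal |∫ h, f h ∂Q| := ENNReal.ofReal_le_ofReal (le_abs_self _)
      _ = ENNReal.ofReal ((∫ h, f h ∂Q) ^ 2) ^ ((2 : ℝ)⁻¹) := by
          rw [ENNReal.ofReal_rpow_of_nonneg (sq_nonneg _) (by norm_num), ← one_div,
            ← Real.sqrt_eq_rpow, Real.sqrt_sq_eq_abs]
      _ ≤ (ENNReal.ofReal ((∫ h, llr Q P h ∂Q + Real.log (∫ h, Real.exp (t * f h ^ 2) ∂P)) / t))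
            ^ ((2 : ℝ)⁻¹) := by gcongr
      _ ≤ _ := by
          rw [ENNReal.ofReal_div_of_pos ht]
          gcongr
          exact ENNReal.ofReal_add_le
  · simp [ENNReal.top_div_of_ne_top]

end ChangeOfMeasure

lemma one_sub_le_measure_lintegral_lt_div {Ω H : Type*} [MeasurableSpace Ω] [MeasurableSpace H]
    {μ : Measure Ω} [IsProbabilityMeasure μ] {P : Measure H} [IsProbabilityMeasure P]
    {G : Ω → H → ℝ≥0∞} (hG : Measurable (Function.uncurry G)) {C δ : ℝ≥0∞} (hC0 : C ≠ 0)
    (hC : C ≠ ⊤) (hδ0 : δ ≠ 0) (hδ : δ ≠ ⊤) (hGC : ∀ h, ∫⁻ ω, G ω h ∂μ ≤ C) :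
    1 - δ ≤ μ {ω | ∫⁻ h, G ω h ∂P < C / δ} := by
  have average_measurable : Measurable fun ω => ∫⁻ h, G ω h ∂P := hG.lintegral_prod_right'
  have average_le : ∫⁻ ω, ∫⁻ h, G ω h ∂P ∂μ ≤ C := by
    rw [lintegral_lintegral_swap hG.aemeasurable]
    exact (lintegral_mono hGC).trans_eq (by simp)
  have markov : μ {ω | C / δ ≤ ∫⁻ h, G ω h ∂P} ≤ δ :=
    calc μ {ω | C / δ ≤ ∫⁻ h, G ω h ∂P}
        ≤ (∫⁻ ω, ∫⁻ h, G ω h ∂P ∂μ) / (C / δ) :=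
          meas_ge_le_lintegral_div average_measurable.aemeasurable
            (ENNReal.div_ne_zero.2 ⟨hC0, hδ⟩) (ENNReal.div_ne_top hC hδ0)
      _ ≤ C / (C / δ) := by gcongr
      _ = δ := ENNReal.div_div_cancel hC0 hC
  calc 1 - δ ≤ 1 - μ {ω | C / δ ≤ ∫⁻ h, G ω h ∂P} := by gcongr
    _ = μ {ω | C / δ ≤ ∫⁻ h, G ω h ∂P}ᶜ :=
        (prob_compl_eq_one_sub (measurableSet_le measurable_const average_measurable)).symm
    _ = μ {ω | ∫⁻ h, G ω h ∂P < C / δ} := by simp only [Set.compl_ofPred, not_le]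

section PACBayes

variable {H Z : Type*} [MeasurableSpace H] [MeasurableSpace Z] {ℓ : H → Z → ℝ} {D : Measure Z}
  [IsProbabilityMeasure D] {P : Measure H} {n : ℕ}

lemma ofReal_integral_risk_le_of_lintegral_exp_sq_le [IsFiniteMeasure P] [NeZero P]
    {Q : Measure H} [IsProbabilityMeasure Q] (hn : n ≠ 0)
    (hℓm : Measurable (Function.uncurry ℓ)) (hℓ : ∀ h z, ℓ h z ∈ Set.Icc (0 : ℝ) 1)
    {zs : Fin n → Z} {c : ℝ}
    (hc : ∫⁻ h, ENNReal.ofReal (Real.exp (2 * n * (risk ℓ D h - empiricalRisk ℓ zs h) ^ 2)) ∂P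
      ≤ ENNReal.ofReal c) :
    ENNReal.ofReal (∫ h, risk ℓ D h ∂Q) ≤
      ENNReal.ofReal (∫ h, empiricalRisk ℓ zs h ∂Q) +
        ((klDiv' Q P + ENNReal.ofReal (Real.log c)) / (2 * n)) ^ ((2 : ℝ)⁻¹) := by
  have risk_measurable : Measurable (risk ℓ D) := measurable_risk hℓm
  have empiricalRisk_measurable : Measurable (empiricalRisk ℓ zs) :=
    (measurable_empiricalRisk hℓm).comp measurable_prodMk_left
  have risk_mem (h : H) : risk ℓ D h ∈ Set.Icc (0 : ℝ) 1 :=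
    risk_mem_Icc (hℓm.comp measurable_prodMk_left).aemeasurable (hℓ h)
  have empiricalRisk_mem (h : H) : empiricalRisk ℓ zs h ∈ Set.Icc (0 : ℝ) 1 :=
    empiricalRisk_mem_Icc hn (hℓ h) zs
  have deviation_mem (h : H) : risk ℓ D h - empiricalRisk ℓ zs h ∈ Set.Icc (-1 : ℝ) 1 :=
    abs_le.1 (abs_sub_le_of_le_of_le (risk_mem h).1 (risk_mem h).2
      (empiricalRisk_mem h).1 (empiricalRisk_mem h).2 |>.trans_eq (sub_zero 1))
  have exp_integrable :
      Integrable (fun h => Real.exp (2 * n * (risk ℓ D h - empiricalRisk ℓ zs h) ^ 2)) P := by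
    refine .of_mem_Icc 0 (Real.exp (2 * n)) (by fun_prop) (.of_forall fun h =>
      ⟨(Real.exp_pos _).le, Real.exp_le_exp.2 (mul_le_of_le_one_right (by positivity) ?_)⟩)
    exact (sq_le_one_iff_abs_le_one _).2 (abs_le.2 (deviation_mem h))
  have exp_le : ∫ h, Real.exp (2 * n * (risk ℓ D h - empiricalRisk ℓ zs h) ^ 2) ∂P ≤ c := by
    rw [← ofReal_integral_eq_lintegral_ofReal exp_integrable
      (.of_forall fun _ => (Real.exp_pos _).le)] at hc
    exact (ENNReal.ofReal_le_ofReal_iff' .. |>.1 hc).resolve_right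
      (integral_exp_pos exp_integrable).not_ge
  calc ENNReal.ofReal (∫ h, risk ℓ D h ∂Q)
      ≤ ENNReal.ofReal (∫ h, empiricalRisk ℓ zs h ∂Q)
        + ENNReal.ofReal (∫ h, (risk ℓ D h - empiricalRisk ℓ zs h) ∂Q) := by
        rw [integral_sub (.of_mem_Icc 0 1 risk_measurable.aemeasurable (.of_forall risk_mem))
          (.of_mem_Icc 0 1 empiricalRisk_measurable.aemeasurable (.of_forall empiricalRisk_mem))]
        exact (congrArg ENNReal.ofReal (add_sub_cancel _ _).symm).trans_le ENNReal.ofReal_add_le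
    _ ≤ ENNReal.ofReal (∫ h, empiricalRisk ℓ zs h ∂Q) +
        ((klDiv' Q P + ENNReal.ofReal (Real.log c)) / ENNReal.ofReal (2 * n)) ^ ((2 : ℝ)⁻¹) := by
        gcongr
        refine (ofReal_integral_le_klDiv'_add_log_rpow (by positivity)
          (memLp_of_bounded (.of_forall deviation_mem) (by fun_prop) 2) exp_integrable).trans ?_
        gcongr
        exact integral_exp_pos exp_integrable
    _ = _ := by simp [ENNReal.ofReal_mul]

lemma one_sub_le_measure_lintegral_exp_sq_le [IsProbabilityMeasure P] (hn : n ≠ 0)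
    (hℓm : Measurable (Function.uncurry ℓ)) (hℓ : ∀ h z, ℓ h z ∈ Set.Icc (0 : ℝ) 1)
    {δ : ℝ} (hδ : 0 < δ) :
    ENNReal.ofReal (1 - δ) ≤ (Measure.pi fun _ : Fin n => D)
      {zs | ∫⁻ h, ENNReal.ofReal (Real.exp (2 * n * (risk ℓ D h - empiricalRisk ℓ zs h) ^ 2)) ∂P
        ≤ ENNReal.ofReal (2 * √n / δ)} := by
  have moment_measurable : Measurable fun p : (Fin n → Z) × H =>
      ENNReal.ofReal (Real.exp (2 * n * (risk ℓ D p.2 - empiricalRisk ℓ p.1 p.2) ^ 2)) :=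
    ((((measurable_risk hℓm).comp measurable_snd).sub (measurable_empiricalRisk hℓm)).pow_const 2
      |>.const_mul _).exp.ennreal_ofReal
  have hmarkov := one_sub_le_measure_lintegral_lt_div (P := P) (δ := ENNReal.ofReal δ)
    moment_measurable (ENNReal.ofReal_pos.2 (by positivity)).ne' ENNReal.ofReal_ne_top
    (ENNReal.ofReal_pos.2 hδ).ne' ENNReal.ofReal_ne_top fun h =>
      lintegral_exp_sq_risk_sub_empiricalRisk_le (D := D) hn
        (hℓm.comp measurable_prodMk_left).aemeasurable (hℓ h)
  rw [← ENNReal.ofReal_div_of_pos hδ, ← ENNReal.ofReal_one, ← ENNReal.ofReal_sub _ hδ.le]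
    at hmarkov
  exact hmarkov.trans (measure_mono (Set.ofPred_subset_ofPred.2 fun _ => le_of_lt))

end PACBayes

/-- McAllester's PAC-Bayes bound: for losses in `[0,1]`, a prior `P` on `H`,
`n ≥ 1` and `δ ∈ (0,1)`, with probability at least `1 − δ` over `n` i.i.d.
samples from `D`, simultaneously for every posterior probability measure `Q`:
`E_{h∼Q}[R h] ≤ E_{h∼Q}[R̂_n h] + sqrt ((KL(Q‖P) + log (2√n/δ)) / (2n))`. -/
theorem mcallester_pac_bayes {H Z : Type*} [MeasurableSpace H] [MeasurableSpace Z]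
    (ℓ : H → Z → ℝ) (hℓmeas : Measurable (Function.uncurry ℓ))
    (hℓbd : ∀ h z, ℓ h z ∈ Set.Icc (0:ℝ) 1)
    (P : Measure H) [IsProbabilityMeasure P]
    (D : Measure Z) [IsProbabilityMeasure D]
    (n : ℕ) (hn : 1 ≤ n) (δ : ℝ) (hδ0 : 0 < δ) (hδ1 : δ < 1) :
    ENNReal.ofReal (1 - δ) ≤
      (Measure.pi fun _ : Fin n => D)
        {zs | ∀ Q : Measure H, IsProbabilityMeasure Q →
          ENNReal.ofReal (∫ h, (∫ z, ℓ h z ∂D) ∂Q) ≤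
            ENNReal.ofReal (∫ h, ((n : ℝ)⁻¹ * ∑ i, ℓ h (zs i)) ∂Q) +
              ((klDiv' Q P + ENNReal.ofReal (Real.log (2 * Real.sqrt n / δ))) /
                  (2 * n)) ^ ((2 : ℝ)⁻¹)} := by
  have hn0 : n ≠ 0 := Nat.one_le_iff_ne_zero.1 hn
  refine (one_sub_le_measure_lintegral_exp_sq_le (P := P) hn0 hℓmeas hℓbd hδ0).trans
    (measure_mono fun zs hzs Q _ => ?_)
  exact ofReal_integral_risk_le_of_lintegral_exp_sq_le hn0 hℓmeas hℓbd hzs
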